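/- Let (φ_n), (ψ_n) be biorthogonal families in ℋ with (ψ_n) complete, and let X, Y be bounded operators on ℋ with X φ_0 = c_0 φ_0, X φ_n = c_n φ_n + d_n φ_{n−1} (n ≥ 1), Y ψ_0 = c'_0 ψ_0, and Y ψ_n = c'_n ψ_n + d'_n ψ_{n−1} (n ≥ 1). Then for every n ≥ 1, the commutator satisfies [X, Y†] φ_n = (d_{n+1} conj(d'_{n+1}) − d_n conj(d'_n)) φ_n + d_n (conj(c'_n) − conj(c'_{n−1})) φ_{n−1} + (c_{n+1} − c_n) conj(d'_{n+1}) φ_{n+1}, and [X, Y†] φ_0 = d_1 conj(d'_1) φ_0 + (c_1 − c_0) conj(d'_1) φ_1. -/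

import Mathlib

local notation "⟪" x ", " y "⟫" => @inner ℂ _ _ x y

/-!
Pairing `Y†φ_n` with the complete family `ψ` and using biorthogonality shows that `Y†` raises `φ`
with the conjugate coefficients of `Y`. The commutator of a lowering and a raising operator is then
read off on each `φ_n`.
-/

section Ladder

variable {R M : Type*} [CommRing R] [AddCommGroup M] [Module R M]

/-- `X` is a lowering operator on the sequence `v`: it acts on `v` by an upper bidiagonal matrix
with diagonal `c` and superdiagonal `d`. The coefficient from `v (n + 1)` to `v n` is `d (n + 1)`,
so `d 0` does not occur. -/
structure IsLoweringOn (X : Module.End R M) (v : ℕ → M) (c d : ℕ → R) : Prop where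
  apply_zero : X (v 0) = c 0 • v 0
  apply_succ (n : ℕ) : X (v (n + 1)) = c (n + 1) • v (n + 1) + d (n + 1) • v n

/-- `Z` is a raising operator on the sequence `v`: it acts on `v` by a lower bidiagonal matrix
with diagonal `a` and subdiagonal `b`. The coefficient from `v n` to `v (n + 1)` is `b (n + 1)`,
the index that the same step carries in `IsLoweringOn`. -/
def IsRaisingOn (Z : Module.End R M) (v : ℕ → M) (a b : ℕ → R) : Prop :=
  ∀ n, Z (v n) = a n • v n + b (n + 1) • v (n + 1)

variable {X Z : Module.End R M} {v : ℕ → M} {a b c d : ℕ → R}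

theorem IsLoweringOn.lie_apply_zero (hX : IsLoweringOn X v c d) (hZ : IsRaisingOn Z v a b) :
    ⁅X, Z⁆ (v 0) = (d 1 * b 1) • v 0 + ((c 1 - c 0) * b 1) • v 1 := by
  have hXZ : X (Z (v 0)) = a 0 • c 0 • v 0 + b 1 • (c 1 • v 1 + d 1 • v 0) := by
    rw [hZ 0, map_add, map_smul, map_smul, hX.apply_zero, hX.apply_succ 0]
  have hZX : Z (X (v 0)) = c 0 • (a 0 • v 0 + b 1 • v 1) := by
    rw [hX.apply_zero, map_smul, hZ 0]
  rw [Ring.lie_def, LinearMap.sub_apply, Module.End.mul_apply, Module.End.mul_apply, hXZ, hZX]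
  module

theorem IsLoweringOn.lie_apply_succ (hX : IsLoweringOn X v c d) (hZ : IsRaisingOn Z v a b)
    (n : ℕ) :
    ⁅X, Z⁆ (v (n + 1)) =
      (d (n + 2) * b (n + 2) - d (n + 1) * b (n + 1)) • v (n + 1) +
        (d (n + 1) * (a (n + 1) - a n)) • v n +
        ((c (n + 2) - c (n + 1)) * b (n + 2)) • v (n + 2) := by
  have hXZ : X (Z (v (n + 1))) =
      a (n + 1) • (c (n + 1) • v (n + 1) + d (n + 1) • v n) +
        b (n + 2) • (c (n + 2) • v (n + 2) + d (n + 2) • v (n + 1)) := by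
    rw [hZ (n + 1), map_add, map_smul, map_smul, hX.apply_succ n, hX.apply_succ (n + 1)]
  have hZX : Z (X (v (n + 1))) =
      c (n + 1) • (a (n + 1) • v (n + 1) + b (n + 2) • v (n + 2)) +
        d (n + 1) • (a n • v n + b (n + 1) • v (n + 1)) := by
    rw [hX.apply_succ n, map_add, map_smul, map_smul, hZ (n + 1), hZ n]
  rw [Ring.lie_def, LinearMap.sub_apply, Module.End.mul_apply, Module.End.mul_apply, hXZ, hZX]
  module

end Ladder

section Biorthogonal

variable {𝕜 E : Type*} [RCLike 𝕜] [NormedAddCommGroup E] [InnerProductSpace 𝕜 E]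

variable (𝕜) in
/-- The families `φ` and `ψ` are biorthogonal: `⟨φ i, ψ j⟩ = δ_{i,j}`. -/
def IsBiorthogonal {ι : Type*} [DecidableEq ι] (φ ψ : ι → E) : Prop :=
  ∀ i j, inner 𝕜 (φ i) (ψ j) = if i = j then 1 else 0

theorem IsBiorthogonal.symm {ι : Type*} [DecidableEq ι] {φ ψ : ι → E}
    (h : IsBiorthogonal 𝕜 φ ψ) : IsBiorthogonal 𝕜 ψ φ := by
  intro i j
  rw [← inner_conj_symm, h j i, apply_ite (starRingEnd 𝕜), map_one, map_zero]
  simp only [eq_comm]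

theorem IsLoweringOn.isRaisingOn_adjoint {Y Z : Module.End 𝕜 E} {φ ψ : ℕ → E} {c d : ℕ → 𝕜}
    (hY : IsLoweringOn Y ψ c d) (hYZ : ∀ x y, inner 𝕜 x (Z y) = inner 𝕜 (Y x) y)
    (hφψ : IsBiorthogonal 𝕜 φ ψ) (hψ : ∀ f, (∀ n, inner 𝕜 (ψ n) f = 0) → f = 0) :
    IsRaisingOn Z φ (fun n ↦ starRingEnd 𝕜 (c n)) (fun n ↦ starRingEnd 𝕜 (d n)) := by
  intro n
  suffices h : ∀ m, inner 𝕜 (ψ m) (Z (φ n)) = inner 𝕜 (ψ m)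
      (starRingEnd 𝕜 (c n) • φ n + starRingEnd 𝕜 (d (n + 1)) • φ (n + 1)) from
    sub_eq_zero.mp <| hψ _ fun m ↦ by rw [inner_sub_right, h m, sub_self]
  intro m
  rw [hYZ, inner_add_right, inner_smul_right, inner_smul_right]
  cases m with
  | zero =>
    rw [hY.apply_zero, inner_smul_left, hφψ.symm, hφψ.symm]
    grind
  | succ m =>
    rw [hY.apply_succ, inner_add_left, inner_smul_left, inner_smul_left]
    simp only [hφψ.symm _ _]
    grind

theorem stmt_8_general {X Y Z : Module.End 𝕜 E} {φ ψ : ℕ → E} {c d c' d' : ℕ → 𝕜}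
    (hYZ : ∀ x y, inner 𝕜 x (Z y) = inner 𝕜 (Y x) y) (hφψ : IsBiorthogonal 𝕜 φ ψ)
    (hψ : ∀ f, (∀ n, inner 𝕜 (ψ n) f = 0) → f = 0)
    (hX : IsLoweringOn X φ c d) (hY : IsLoweringOn Y ψ c' d') :
    (∀ n, ⁅X, Z⁆ (φ (n + 1)) =
      (d (n + 2) * starRingEnd 𝕜 (d' (n + 2)) - d (n + 1) * starRingEnd 𝕜 (d' (n + 1))) •
          φ (n + 1) +
        (d (n + 1) * (starRingEnd 𝕜 (c' (n + 1)) - starRingEnd 𝕜 (c' n))) • φ n +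
        ((c (n + 2) - c (n + 1)) * starRingEnd 𝕜 (d' (n + 2))) • φ (n + 2)) ∧
    ⁅X, Z⁆ (φ 0) =
      (d 1 * starRingEnd 𝕜 (d' 1)) • φ 0 + ((c 1 - c 0) * starRingEnd 𝕜 (d' 1)) • φ 1 :=
  have hZ := hY.isRaisingOn_adjoint hYZ hφψ hψ
  ⟨hX.lie_apply_succ hZ, hX.lie_apply_zero hZ⟩

end Biorthogonal

/-- Under the same hypotheses as Statement 7, the commutator `[X, Y†]` acts as
`[X, Y†] φ n = (d (n+1) conj (d' (n+1)) - d n conj (d' n)) • φ n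
  + d n (conj (c' n) - conj (c' (n-1))) • φ (n-1) + (c (n+1) - c n) conj (d' (n+1)) • φ (n+1)`
for `n ≥ 1`, and `[X, Y†] φ 0 = d 1 conj (d' 1) • φ 0 + (c 1 - c 0) conj (d' 1) • φ 1`. -/
theorem stmt_8 {𝓗 : Type*} [NormedAddCommGroup 𝓗] [InnerProductSpace ℂ 𝓗] [CompleteSpace 𝓗]
    (X Y : 𝓗 →L[ℂ] 𝓗) (φ ψ : ℕ → 𝓗)
    (hbi : ∀ n m : ℕ, ⟪φ n, ψ m⟫ = if n = m then 1 else 0)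
    (hcomp : ∀ f : 𝓗, (∀ n : ℕ, ⟪ψ n, f⟫ = 0) → f = 0)
    (c d c' d' : ℕ → ℂ)
    (hX0 : X (φ 0) = c 0 • φ 0)
    (hX : ∀ n : ℕ, 1 ≤ n → X (φ n) = c n • φ n + d n • φ (n - 1))
    (hY0 : Y (ψ 0) = c' 0 • ψ 0)
    (hY : ∀ n : ℕ, 1 ≤ n → Y (ψ n) = c' n • ψ n + d' n • ψ (n - 1)) :
    (∀ n : ℕ, 1 ≤ n →
      (X ∘L ContinuousLinearMap.adjoint Y - ContinuousLinearMap.adjoint Y ∘L X) (φ n) =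
        (d (n + 1) * (starRingEnd ℂ) (d' (n + 1)) - d n * (starRingEnd ℂ) (d' n)) • φ n +
          (d n * ((starRingEnd ℂ) (c' n) - (starRingEnd ℂ) (c' (n - 1)))) • φ (n - 1) +
          ((c (n + 1) - c n) * (starRingEnd ℂ) (d' (n + 1))) • φ (n + 1)) ∧
    (X ∘L ContinuousLinearMap.adjoint Y - ContinuousLinearMap.adjoint Y ∘L X) (φ 0) =
      (d 1 * (starRingEnd ℂ) (d' 1)) • φ 0 + ((c 1 - c 0) * (starRingEnd ℂ) (d' 1)) • φ 1 := by
  have hXφ : IsLoweringOn X.toLinearMap φ c d := ⟨hX0, fun n ↦ hX (n + 1) n.succ_pos⟩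
  have hYψ : IsLoweringOn Y.toLinearMap ψ c' d' := ⟨hY0, fun n ↦ hY (n + 1) n.succ_pos⟩
  have h := stmt_8_general Y.adjoint_inner_right hbi hcomp hXφ hYψ
  exact ⟨fun | n + 1, _ => h.1 n, h.2⟩
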